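/- Assume M̄ ≥ 2D. Let s ∈ T, let τ(s) := inf{m > s : m ∈ T}, and suppose condition (D) holds at every index k ∈ {s−1, s, s+1, s+2, s+3} (so that τ(s) ≤ s+3). Then M_{τ(s)} ≤ max(a⁻¹ M_{s−1}, M̄). -/

import Mathlib

/-!
Let `s` be a sign change and `N = M_s ≥ M̄`. Until the next sign change the step sizes are
`N, N, a N, …`, and a sign change replaces the last step size `M` by `max (a⁻¹ M) M̄`; so one that
comes at `s + 1`, `s + 2` or `s + 3` produces a step size of at most `N`.

It cannot come later. The estimate lay behind the signal at time `s - 1` and has since travelled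
`M_{s-1} δ ≤ a N δ` in the old direction. Without a sign change before `s + 3` it travels back by
`(2 + a) N δ`, a net distance of at least `2 N δ ≥ 2 M̄ δ`. Over these four sampling periods the
signal moves by at most `4 D δ ≤ 2 M̄ δ`, so the estimate has met or passed it at time `s + 3`.
-/

noncomputable section

/-- Membership in the set `T = {k ≥ 1 : h_{k-1} h_k < 0}` of sign-change indices. -/
def Tmem (h : ℤ → ℝ) (k : ℕ) : Prop := 1 ≤ k ∧ h ((k : ℤ) - 1) * h (k : ℤ) < 0

/-- The modified adaptive delta modulation system: sequences `h_k` (binary symbols,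
indexed by `ℤ` so that `h (-1) = 1` makes sense), `y_k` (estimates at sample points)
and `M_k` (step sizes), driven by the sampled signal `x (k δ)`. -/
structure ADM (δ a Mbar M₀ y₀ : ℝ) (x : ℝ → ℝ) where
  h : ℤ → ℝ
  y : ℕ → ℝ
  M : ℕ → ℝ
  h_init : h (-1) = 1
  h_lt : ∀ k : ℕ, y k < x (k * δ) → h (k : ℤ) = 1
  h_gt : ∀ k : ℕ, x (k * δ) < y k → h (k : ℤ) = -1
  h_eq : ∀ k : ℕ, y k = x (k * δ) → h (k : ℤ) = - h ((k : ℤ) - 1)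
  y_zero : y 0 = y₀
  y_rec : ∀ k : ℕ, y (k + 1) = y k + h (k : ℤ) * M k * δ
  M_zero : M 0 = M₀
  M_pos : ∀ k : ℕ, 0 < M k
  M_rec_T : ∀ k : ℕ, Tmem h k → M k = max (a⁻¹ * M (k - 1)) Mbar
  M_rec_prev : ∀ k : ℕ, 1 ≤ k → ¬ Tmem h k → Tmem h (k - 1) → M k = M (k - 1)
  M_rec_grow : ∀ k : ℕ, 1 ≤ k → ¬ Tmem h k → ¬ Tmem h (k - 1) → M k = a * M (k - 1)

/-- Condition (D) at index `k`: `sup_{t ∈ [t_k, t_{k+1}]} |x(t) − x(t_k)| ≤ D δ`. -/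
def condD (δ D : ℝ) (x : ℝ → ℝ) (k : ℕ) : Prop :=
  ∀ t ∈ Set.Icc ((k : ℝ) * δ) (((k : ℝ) + 1) * δ), |x t - x ((k : ℝ) * δ)| ≤ D * δ

namespace ADM

variable {δ a Mbar M₀ y₀ : ℝ} {x : ℝ → ℝ} (S : ADM δ a Mbar M₀ y₀ x)

lemma h_mul_self (k : ℕ) : S.h k * S.h k = 1 := by
  -- Shifting the index by one lets the induction start from the initial value `h (-1) = 1`.
  suffices h : ∀ k : ℕ, S.h ((k : ℤ) - 1) * S.h ((k : ℤ) - 1) = 1 by simpa using h (k + 1)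
  intro k
  induction k with
  | zero => simp [S.h_init]
  | succ k ih =>
    rw [Nat.cast_succ, add_sub_cancel_right]
    rcases lt_trichotomy (S.y k) (x (k * δ)) with hlt | heq | hgt
    · simp [S.h_lt k hlt]
    · simpa [S.h_eq k heq] using ih
    · simp [S.h_gt k hgt]

lemma h_mul_signal_sub_estimate_nonneg (k : ℕ) : 0 ≤ S.h k * (x (k * δ) - S.y k) := by
  rcases lt_trichotomy (S.y k) (x (k * δ)) with hlt | heq | hgt
  · simpa [S.h_lt k hlt] using hlt.le
  · simp [heq]
  · simpa [S.h_gt k hgt] using hgt.le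

lemma tmem_succ_iff {k : ℕ} : Tmem S.h (k + 1) ↔ S.h (k + 1 : ℕ) = -S.h k := by
  have hpred : ((k + 1 : ℕ) : ℤ) - 1 = k := by simp
  rw [Tmem, hpred]
  rcases mul_self_eq_one_iff.1 (S.h_mul_self k) with h | h <;>
    rcases mul_self_eq_one_iff.1 (S.h_mul_self (k + 1)) with h' | h' <;>
    rw [h, h'] <;> norm_num

lemma h_succ_of_not_tmem {k : ℕ} (hk : ¬ Tmem S.h (k + 1)) : S.h (k + 1 : ℕ) = S.h k := by
  rw [tmem_succ_iff] at hk
  have hsq : S.h (k + 1 : ℕ) * S.h (k + 1 : ℕ) = S.h k * S.h k := by simp only [h_mul_self]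
  exact (mul_self_eq_mul_self_iff.1 hsq).resolve_right hk

lemma tmem_succ_of_h_mul_nonpos {k : ℕ}
    (hk : S.h k * (x ((k + 1 : ℕ) * δ) - S.y (k + 1)) ≤ 0) : Tmem S.h (k + 1) := by
  by_contra hT
  have hnonneg := S.h_mul_signal_sub_estimate_nonneg (k + 1)
  rw [S.h_succ_of_not_tmem hT] at hnonneg
  have hne : S.h k ≠ 0 := left_ne_zero_of_mul_eq_one (S.h_mul_self k)
  have htie : x ((k + 1 : ℕ) * δ) - S.y (k + 1) = 0 :=
    (mul_eq_zero.1 (hk.antisymm hnonneg)).resolve_left hne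
  have hflip := S.h_eq (k + 1) (sub_eq_zero.1 htie).symm
  exact hT (S.tmem_succ_iff.2 (by simpa using hflip))

lemma h_eq_of_forall_not_tmem {s k : ℕ} (hsk : s ≤ k)
    (hT : ∀ i ∈ Set.Ioc s k, ¬ Tmem S.h i) : S.h k = S.h s := by
  induction k, hsk using Nat.le_induction with
  | base => rfl
  | succ k hsk ih =>
    rw [S.h_succ_of_not_tmem (hT (k + 1) ⟨by lia, le_rfl⟩)]
    exact ih fun i hi ↦ hT i ⟨hi.1, hi.2.trans k.le_succ⟩

lemma y_eq_of_forall_not_tmem {s k : ℕ} (hsk : s ≤ k)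
    (hT : ∀ i ∈ Set.Ioo s k, ¬ Tmem S.h i) :
    S.y k = S.y s + S.h s * (∑ i ∈ Finset.Ico s k, S.M i) * δ := by
  induction k, hsk using Nat.le_induction with
  | base => simp
  | succ k hsk ih =>
    have hh : S.h k = S.h s :=
      S.h_eq_of_forall_not_tmem hsk fun i hi ↦ hT i ⟨hi.1, Nat.lt_succ_of_le hi.2⟩
    rw [S.y_rec, ih fun i hi ↦ hT i ⟨hi.1, hi.2.trans k.lt_succ_self⟩, hh,
      Finset.sum_Ico_succ_top hsk]
    ring

lemma M_eq_pow_mul_of_forall_not_tmem {s : ℕ} (hs : Tmem S.h s) (j : ℕ)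
    (hT : ∀ i ∈ Set.Ioc s (s + j + 1), ¬ Tmem S.h i) : S.M (s + j + 1) = a ^ j * S.M s := by
  induction j with
  | zero => simpa using S.M_rec_prev (s + 1) (by lia) (hT (s + 1) ⟨by lia, le_rfl⟩) hs
  | succ j ih =>
    have hgrow : S.M (s + j + 2) = a * S.M (s + j + 1) :=
      S.M_rec_grow (s + j + 2) (by lia) (hT _ ⟨by lia, le_rfl⟩) (hT _ ⟨by lia, by lia⟩)
    rw [← add_assoc, hgrow, ih fun i hi ↦ hT i ⟨hi.1, hi.2.trans (by lia)⟩, pow_succ', mul_assoc]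

lemma tmem_of_abs_sub_le {n m : ℕ} (hnm : n + 1 < m) (hn : Tmem S.h (n + 1))
    (hT : ∀ i ∈ Set.Ioo (n + 1) m, ¬ Tmem S.h i)
    (hx : |x (m * δ) - x (n * δ)| ≤ (∑ i ∈ Finset.Ico (n + 1) m, S.M i - S.M n) * δ) :
    Tmem S.h m := by
  obtain ⟨k, rfl⟩ := Nat.exists_eq_add_of_lt hnm
  apply S.tmem_succ_of_h_mul_nonpos
  set d := x ((n + 1 + k + 1 : ℕ) * δ) - x (n * δ)
  set L := ∑ i ∈ Finset.Ico (n + 1) (n + 1 + k + 1), S.M i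
  have hturn : S.h (n + 1 : ℕ) = -S.h n := S.tmem_succ_iff.1 hn
  have hdir : S.h (n + 1 + k : ℕ) = -S.h n :=
    (S.h_eq_of_forall_not_tmem (by lia)
      fun i hi ↦ hT i ⟨hi.1, Nat.lt_succ_of_le hi.2⟩).trans hturn
  have hy : S.y (n + 1 + k + 1) = S.y n + S.h n * (S.M n - L) * δ := by
    rw [S.y_eq_of_forall_not_tmem hnm.le hT, hturn, S.y_rec]
    ring
  have hd : -(S.h n * d) ≤ (L - S.M n) * δ := by
    have habs : |S.h n| = 1 := (abs_eq zero_le_one).2 (mul_self_eq_one_iff.1 (S.h_mul_self n))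
    calc -(S.h n * d) ≤ |S.h n * d| := neg_le_abs _
      _ = |d| := by rw [abs_mul, habs, one_mul]
      _ ≤ (L - S.M n) * δ := hx
  calc S.h (n + 1 + k : ℕ) * (x ((n + 1 + k + 1 : ℕ) * δ) - S.y (n + 1 + k + 1))
      = -(S.h n * d) - S.h n * (x (n * δ) - S.y n) - (S.h n * S.h n) * ((L - S.M n) * δ) := by
        rw [hdir, hy]; ring
    _ ≤ 0 := by
        rw [S.h_mul_self]
        linarith [S.h_mul_signal_sub_estimate_nonneg n]

lemma Mbar_le_M_of_tmem {s : ℕ} (hs : Tmem S.h s) : Mbar ≤ S.M s :=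
  S.M_rec_T s hs ▸ le_max_right _ _

lemma M_le_mul_M_succ_of_tmem (ha : 0 < a) {n : ℕ} (hn : Tmem S.h (n + 1)) :
    S.M n ≤ a * S.M (n + 1) :=
  (inv_mul_le_iff₀ ha).1 (S.M_rec_T (n + 1) hn ▸ le_max_left _ _)

lemma exists_tmem_mem_Ioc_add_three (hδ : 0 ≤ δ) (ha : 0 < a) {n : ℕ} (hn : Tmem S.h (n + 1))
    (hx : |x ((n + 4 : ℕ) * δ) - x (n * δ)| ≤ 2 * Mbar * δ) :
    ∃ m ∈ Set.Ioc (n + 1) (n + 4), Tmem S.h m := by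
  by_contra! hT
  have hM₂ : S.M (n + 2) = S.M (n + 1) := by
    simpa using S.M_eq_pow_mul_of_forall_not_tmem hn 0 fun i hi ↦ hT i ⟨hi.1, by grind⟩
  have hM₃ : S.M (n + 3) = a * S.M (n + 1) := by
    simpa using S.M_eq_pow_mul_of_forall_not_tmem hn 1 fun i hi ↦ hT i ⟨hi.1, by grind⟩
  have hsum : ∑ i ∈ Finset.Ico (n + 1) (n + 4), S.M i = (2 + a) * S.M (n + 1) := by
    rw [Finset.sum_Ico_succ_top (by lia), Finset.sum_Ico_succ_top (by lia),
      Nat.Ico_succ_singleton, Finset.sum_singleton, hM₂, hM₃]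
    ring
  refine hT (n + 4) ⟨by lia, le_rfl⟩
    (S.tmem_of_abs_sub_le (by lia) hn (fun i hi ↦ hT i ⟨hi.1, hi.2.le⟩) (hx.trans ?_))
  rw [hsum]
  gcongr
  linarith [S.Mbar_le_M_of_tmem hn, S.M_le_mul_M_succ_of_tmem ha hn]

lemma M_le_of_isLeast_tmem (ha : 1 ≤ a) {s m : ℕ} (hs : Tmem S.h s)
    (hm : IsLeast {m : ℕ | s < m ∧ Tmem S.h m} m) (hms : m ≤ s + 3) : S.M m ≤ S.M s := by
  obtain ⟨j, rfl⟩ := Nat.exists_eq_add_of_lt hm.1.1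
  have hT : ∀ i ∈ Set.Ioc s (s + j), ¬ Tmem S.h i := fun i hi hTi ↦
    (hm.2 ⟨hi.1, hTi⟩).not_gt (Nat.lt_succ_of_le hi.2)
  have hlast : S.M (s + j) ≤ a * S.M s := by
    cases j with
    | zero => exact le_mul_of_one_le_left (S.M_pos s).le ha
    | succ i =>
      calc S.M (s + i + 1) = a ^ i * S.M s := S.M_eq_pow_mul_of_forall_not_tmem hs i hT
        _ ≤ a * S.M s := mul_le_mul_of_nonneg_right
            ((pow_le_pow_right₀ ha (by lia)).trans_eq (pow_one a)) (S.M_pos s).le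
  have hrec : S.M (s + j + 1) = max (a⁻¹ * S.M (s + j)) Mbar := S.M_rec_T _ hm.1.2
  rw [hrec]
  exact max_le ((inv_mul_le_iff₀ (zero_lt_one.trans_le ha)).2 hlast) (S.Mbar_le_M_of_tmem hs)

end ADM

lemma condD.abs_sub_le {δ D : ℝ} {x : ℝ → ℝ} (hδ : 0 ≤ δ) {m n : ℕ} (hmn : m ≤ n)
    (hx : ∀ k : ℕ, m ≤ k → k < n → condD δ D x k) :
    |x (n * δ) - x (m * δ)| ≤ (n - m) * (D * δ) := by
  have hstep {k : ℕ} (hmk : m ≤ k) (hkn : k < n) :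
      dist (x (k * δ)) (x ((k + 1 : ℕ) * δ)) ≤ D * δ := by
    rw [dist_comm, Real.dist_eq, Nat.cast_succ]
    exact hx k hmk hkn _ ⟨mul_le_mul_of_nonneg_right (lt_add_one _).le hδ, le_rfl⟩
  have hsum := dist_le_Ico_sum_of_dist_le (f := fun k : ℕ ↦ x (k * δ)) hmn hstep
  rwa [dist_comm, Real.dist_eq, Finset.sum_const, Nat.card_Ico, nsmul_eq_mul,
    Nat.cast_sub hmn] at hsum

theorem stmt6_general {δ a Mbar M₀ y₀ : ℝ} {x : ℝ → ℝ} (hδ : 0 ≤ δ) (ha : 1 ≤ a)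
    (S : ADM δ a Mbar M₀ y₀ x) {s : ℕ} (hs : Tmem S.h s)
    (hx : |x ((s + 3 : ℕ) * δ) - x ((s - 1 : ℕ) * δ)| ≤ 2 * Mbar * δ) :
    S.M (sInf {m : ℕ | s < m ∧ Tmem S.h m}) ≤ max (a⁻¹ * S.M (s - 1)) Mbar := by
  obtain ⟨n, rfl⟩ := Nat.exists_eq_add_of_le' hs.1
  obtain ⟨m, ⟨hlt, hle⟩, hm⟩ :=
    S.exists_tmem_mem_Ioc_add_three hδ (zero_lt_one.trans_le ha) hs hx
  have hleast : IsLeast {m : ℕ | n + 1 < m ∧ Tmem S.h m} (sInf {m : ℕ | n + 1 < m ∧ Tmem S.h m}) :=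
    ⟨Nat.sInf_mem ⟨m, hlt, hm⟩, fun _ ↦ Nat.sInf_le⟩
  rw [← S.M_rec_T (n + 1) hs]
  exact S.M_le_of_isLeast_tmem ha hs hleast ((hleast.2 ⟨hlt, hm⟩).trans hle)

/-- if `M̄ ≥ 2D`, `s ∈ T`, `τ(s) = inf{m > s : m ∈ T}`, and condition (D)
holds at every index `k ∈ {s−1, …, s+3}`, then `M_{τ(s)} ≤ max(a⁻¹ M_{s−1}, M̄)`. -/
theorem stmt6 (δ a Mbar M₀ y₀ D : ℝ) (x : ℝ → ℝ)
    (hδ : 0 < δ) (ha : 1 < a) (ha2 : a ≤ 2) (hMbar : 0 < Mbar) (hM₀ : 0 < M₀)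
    (hD : 0 < D) (hMD : 2 * D ≤ Mbar)
    (S : ADM δ a Mbar M₀ y₀ x)
    (s : ℕ) (hs : Tmem S.h s)
    (hDcond : ∀ k : ℕ, s - 1 ≤ k → k ≤ s + 3 → condD δ D x k)
    (τs : ℕ) (hτs : τs = sInf {m : ℕ | s < m ∧ Tmem S.h m}) :
    S.M τs ≤ max (a⁻¹ * S.M (s - 1)) Mbar := by
  have hx := condD.abs_sub_le hδ.le (by lia) fun k hk hk' ↦ hDcond k hk (Nat.le_of_lt hk')
  have hs' : ((s - 1 : ℕ) : ℝ) = s - 1 := Nat.cast_pred hs.1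
  have hDM : 2 * D * δ ≤ Mbar * δ := mul_le_mul_of_nonneg_right hMD hδ.le
  exact hτs ▸ stmt6_general hδ.le ha.le S hs (hx.trans (by push_cast [hs']; linarith))
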